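/- For every complex number q with 0 < |q| < 1, one has ∑_{i,j,k,l ≥ 0} q^{2i²+2j²+2k²+2l²−2ij−2ik−2il+2jk+2jl−2i+j+2k} / ((q²;q²)_i (q²;q²)_j (q²;q²)_k (q²;q²)_l) = (1/(J_1 J_2 J_16)) · ( 2 J_8² J_{1,8} J_{6,16} / J_4 + J_4⁵ J_{3,8} J_{2,16} / (J_2² J_8²) ). -/

import Mathlib

open scoped BigOperators

/-- The infinite q-Pochhammer symbol `(a; q)_∞ = ∏_{k=0}^∞ (1 - a q^k)`. -/
noncomputable def qPochInf (a q : ℂ) : ℂ := ∏' n : ℕ, (1 - a * q ^ n)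

/-- The finite q-Pochhammer symbol `(a; q)_n = ∏_{k=0}^{n-1} (1 - a q^k)`. -/
noncomputable def qPoch (a q : ℂ) (n : ℕ) : ℂ :=
  Finset.prod (Finset.range n) (fun k => 1 - a * q ^ k)

/-- `J_m = (q^m; q^m)_∞`. -/
noncomputable def J (q : ℂ) (m : ℕ) : ℂ := qPochInf (q ^ m) (q ^ m)

/-- `J_{a,m} = (q^a; q^m)_∞ (q^{m-a}; q^m)_∞ (q^m; q^m)_∞`. -/
noncomputable def Jam (q : ℂ) (a m : ℕ) : ℂ :=
  qPochInf (q ^ a) (q ^ m) * qPochInf (q ^ (m - a)) (q ^ m) * qPochInf (q ^ m) (q ^ m)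

open Filter Topology

lemma norm_pow_lt {p : ℂ} (hp : ‖p‖ < 1) {m : ℕ} (hm : m ≠ 0) : ‖p ^ m‖ < 1 := by
  rw [norm_pow]; exact pow_lt_one₀ (norm_nonneg _) hp hm

lemma summable_ap (a : ℂ) {p : ℂ} (hp : ‖p‖ < 1) : Summable (fun n : ℕ => ‖-(a * p ^ n)‖) := by
  simp only [norm_neg, norm_mul, norm_pow]
  exact (summable_geometric_of_lt_one (norm_nonneg _) hp).mul_left _

lemma mult_ap (a : ℂ) {p : ℂ} (hp : ‖p‖ < 1) : Multipliable (fun n : ℕ => 1 - a * p ^ n) := by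
  simp only [sub_eq_add_neg]
  exact multipliable_one_add_of_summable (summable_ap a hp)

lemma qPoch_tendsto (a : ℂ) {p : ℂ} (hp : ‖p‖ < 1) :
    Tendsto (fun n => qPoch a p n) atTop (𝓝 (qPochInf a p)) :=
  (mult_ap a hp).hasProd.tendsto_prod_nat

lemma qPochInf_ne {a p : ℂ} (hp : ‖p‖ < 1) (h : ∀ n : ℕ, 1 - a * p ^ n ≠ 0) : qPochInf a p ≠ 0 := by
  have := tprod_one_add_ne_zero_of_summable (f := fun n : ℕ => -(a * p ^ n))
    (fun n => by simpa [sub_eq_add_neg] using h n) (summable_ap a hp)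
  simpa [qPochInf, sub_eq_add_neg] using this

lemma one_sub_pow_ne {p : ℂ} (hp : ‖p‖ < 1) {n : ℕ} (hn : n ≠ 0) : 1 - p ^ n ≠ 0 := by
  intro h
  have h1 := norm_pow_lt hp hn
  rw [← sub_eq_zero.mp h] at h1
  simp at h1

lemma qPp_ne {p : ℂ} (hp : ‖p‖ < 1) : qPochInf p p ≠ 0 := by
  apply qPochInf_ne hp
  intro n
  rw [← pow_succ']
  exact one_sub_pow_ne hp (by simp)

lemma qPoch_pp_ne {p : ℂ} (hp : ‖p‖ < 1) (n : ℕ) : qPoch p p n ≠ 0 := by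
  unfold qPoch
  rw [Finset.prod_ne_zero_iff]
  intro k _
  rw [← pow_succ']
  exact one_sub_pow_ne hp (by simp)

lemma qPoch_succ (a p : ℂ) (n : ℕ) : qPoch a p (n + 1) = qPoch a p n * (1 - a * p ^ n) := by
  simp [qPoch, Finset.prod_range_succ]

lemma qPoch_pp_succ (p : ℂ) (n : ℕ) : qPoch p p (n + 1) = qPoch p p n * (1 - p ^ (n + 1)) := by
  rw [qPoch_succ, ← pow_succ']

lemma qPoch_zero (a p : ℂ) : qPoch a p 0 = 1 := by simp [qPoch]

lemma qPoch_inv_bdd {p : ℂ} (hp : ‖p‖ < 1) : ∃ C : ℝ, 0 < C ∧ ∀ n, ‖(qPoch p p n)⁻¹‖ ≤ C := by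
  have h := ((qPoch_tendsto p hp).inv₀ (qPp_ne hp)).norm.bddAbove_range
  obtain ⟨C, hC⟩ := h
  refine ⟨max C 1, by positivity, fun n => le_max_of_le_left (hC ⟨n, rfl⟩)⟩

lemma qPochInf_shift (a : ℂ) {p : ℂ} (hp : ‖p‖ < 1) :
    qPochInf a p = (1 - a) * qPochInf (a * p) p := by
  have h1 := (qPoch_tendsto a hp).comp (tendsto_add_atTop_nat 1)
  have h2 := (qPoch_tendsto (a * p) hp).const_mul (1 - a)
  refine tendsto_nhds_unique h1 (h2.congr fun n => ?_)
  simp only [Function.comp, qPoch]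
  rw [Finset.prod_range_succ', mul_comm]
  simp [pow_succ', mul_assoc]

lemma qPoch_split (a p : ℂ) (m n : ℕ) :
    qPoch a p (m * n) = ∏ r ∈ Finset.range m, qPoch (a * p ^ r) (p ^ m) n := by
  induction n with
  | zero => simp [qPoch]
  | succ n ih =>
    simp only [qPoch_succ, Finset.prod_mul_distrib, ← ih]
    rw [mul_add, mul_one]
    unfold qPoch
    rw [Finset.prod_range_add]
    congr 1
    refine Finset.prod_congr rfl fun r _ => ?_
    rw [pow_add, ← pow_mul]; ring

lemma qPochInf_split (a : ℂ) {p : ℂ} (hp : ‖p‖ < 1) {m : ℕ} (hm : m ≠ 0) :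
    qPochInf a p = ∏ r ∈ Finset.range m, qPochInf (a * p ^ r) (p ^ m) := by
  have h1 := (qPoch_tendsto a hp).comp
    (tendsto_id.const_mul_atTop' (Nat.pos_of_ne_zero hm) : Tendsto (fun n : ℕ => m * n) atTop atTop)
  have h2 := tendsto_finsetProd (Finset.range m)
    (fun r _ => qPoch_tendsto (a * p ^ r) (norm_pow_lt hp hm))
  refine tendsto_nhds_unique h1 (h2.congr fun n => ?_)
  simp [Function.comp, qPoch_split]

lemma qPochInf_neg (a : ℂ) {p : ℂ} (hp : ‖p‖ < 1) :
    qPochInf a p * qPochInf (-a) p = qPochInf (a ^ 2) (p ^ 2) := by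
  have h1 := (qPoch_tendsto a hp).mul (qPoch_tendsto (-a) hp)
  have h2 := qPoch_tendsto (a ^ 2) (norm_pow_lt hp two_ne_zero)
  refine tendsto_nhds_unique h1 (h2.congr fun n => ?_)
  simp only [qPoch, ← Finset.prod_mul_distrib]
  refine Finset.prod_congr rfl fun r _ => ?_
  ring

/-- Summability of geometric-dominated families. -/
lemma euler_summable (z : ℂ) {p : ℂ} (hp : ‖p‖ < 1) :
    Summable (fun n : ℕ => ‖(-z) ^ n * p ^ (n * (n - 1) / 2) / qPoch p p n‖) := by
  rcases eq_or_ne z 0 with rfl | hz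
  · apply summable_of_ne_finset_zero (s := {0})
    intro n hn
    simp at hn
    simp [hn]
  rcases eq_or_ne p 0 with rfl | hp0
  · apply summable_of_ne_finset_zero (s := {0, 1})
    intro n hn
    simp at hn
    have : n * (n - 1) / 2 ≠ 0 := by
      have : 2 ≤ n * (n - 1) := by
        obtain ⟨m, rfl⟩ : ∃ m, n = m + 2 := ⟨n - 2, by omega⟩
        simp; nlinarith
      omega
    simp [this]
  apply summable_of_ratio_test_tendsto_lt_one (l := 0) zero_lt_one
  · filter_upwards with n
    simp [hz, hp0, qPoch_pp_ne hp n]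
  · have h1 : Tendsto (fun n : ℕ => ‖z * p ^ n / (1 - p ^ (n + 1))‖) atTop (𝓝 0) := by
      have h := tendsto_pow_atTop_nhds_zero_of_norm_lt_one hp
      have h' := h.comp (tendsto_add_atTop_nat 1)
      have := ((h.const_mul z).div (h'.const_sub 1) (by simp)).norm
      simpa using this
    refine h1.congr fun n => ?_
    have e : (n + 1) * (n + 1 - 1) / 2 = n * (n - 1) / 2 + n := by
      rw [← Nat.add_mul_div_left _ _ two_pos]
      congr 1
      cases n with
      | zero => rfl
      | succ m => simp; ring
    rw [norm_norm, norm_norm, ← norm_div, e, qPoch_pp_succ]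
    have := qPoch_pp_ne hp n
    have := one_sub_pow_ne hp (n := n + 1) (by simp)
    rw [pow_succ, pow_add, div_div_eq_mul_div]
    rw [← norm_neg]
    congr 1
    have hz' : (-z) ^ n ≠ 0 := pow_ne_zero _ (neg_ne_zero.mpr hz)
    generalize (-z) ^ n = w at *
    field_simp
    ring

/-- Euler's identity. -/
lemma euler (z : ℂ) {p : ℂ} (hp : ‖p‖ < 1) :
    ∑' n : ℕ, (-z) ^ n * p ^ (n * (n - 1) / 2) / qPoch p p n = qPochInf z p := by
  set F : ℂ → ℂ := fun z => ∑' n : ℕ, (-z) ^ n * p ^ (n * (n - 1) / 2) / qPoch p p n with hF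
  have hfun : ∀ z, F z = (1 - z) * F (z * p) := by
    intro z
    have s1 := (euler_summable z hp).of_norm
    have s2 := (euler_summable (z * p) hp).of_norm
    have : F z - F (z * p) = - z * F (z * p) := by
      simp only [hF]
      rw [← s1.tsum_sub s2, (s1.sub s2).tsum_eq_zero_add, ← tsum_mul_left]
      simp only [pow_zero, sub_self, zero_add]
      apply tsum_congr
      intro n
      have e : (n + 1) * (n + 1 - 1) / 2 = n * (n - 1) / 2 + n := by
        rw [← Nat.add_mul_div_left _ _ two_pos]
        congr 1
        cases n with
        | zero => rfl
        | succ m => simp; ring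
      rw [e, qPoch_pp_succ]
      have := qPoch_pp_ne hp n
      have := one_sub_pow_ne hp (n := n + 1) (by simp)
      rw [← neg_mul, mul_pow, mul_pow]
      field_simp
      ring
    linear_combination this
  have hit : ∀ n, F z = qPoch z p n * F (z * p ^ n) := by
    intro n
    induction n with
    | zero => simp [qPoch]
    | succ n ih => rw [ih, hfun, qPoch_succ, pow_succ]; ring_nf
  have hlim : Tendsto (fun n : ℕ => F (z * p ^ n)) atTop (𝓝 1) := by
    have h0 : ∑' n : ℕ, (if n = 0 then (1 : ℂ) else 0) = 1 := by simp
    rw [← h0]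
    apply tendsto_tsum_of_dominated_convergence (euler_summable z hp)
    · intro k
      rcases Nat.eq_zero_or_pos k with rfl | hk
      · simp [qPoch]
      · have h := tendsto_pow_atTop_nhds_zero_of_norm_lt_one hp
        have : Tendsto (fun n : ℕ => (-(z * p ^ n)) ^ k * p ^ (k * (k - 1) / 2) / qPoch p p k)
            atTop (𝓝 ((-(z * 0)) ^ k * p ^ (k * (k - 1) / 2) / qPoch p p k)) := by
          exact ((((h.const_mul z).neg).pow k).mul_const _).div_const _
        simpa [hk.ne'] using this
    · filter_upwards with n k
      rw [norm_div, norm_div, norm_mul, norm_mul]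
      gcongr
      rw [norm_pow, norm_pow, norm_neg, norm_neg, norm_mul]
      gcongr
      have : ‖p ^ n‖ ≤ 1 := by rw [norm_pow]; exact pow_le_one₀ (norm_nonneg _) hp.le
      nlinarith [norm_nonneg z]
  have := (qPoch_tendsto z hp).mul hlim
  rw [mul_one] at this
  exact tendsto_nhds_unique (tendsto_const_nhds.congr hit) this

lemma durfee_bound {p : ℂ} (hp : ‖p‖ < 1) : ∃ C : ℝ, 0 < C ∧ ∀ (m i e : ℕ),
    ‖p ^ e / (qPoch p p i * qPoch p p (i + m))‖ ≤ C * ‖p‖ ^ e := by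
  obtain ⟨C, hC, h⟩ := qPoch_inv_bdd hp
  refine ⟨C * C, by positivity, fun m i e => ?_⟩
  rw [div_eq_mul_inv, mul_inv, norm_mul, norm_mul, norm_pow, mul_comm]
  gcongr
  · exact h _
  · exact h _

lemma durfee_summable {p : ℂ} (hp : ‖p‖ < 1) (m : ℕ) (e : ℕ → ℕ) (he : ∀ i, i ≤ e i) :
    Summable (fun i : ℕ => p ^ (e i) / (qPoch p p i * qPoch p p (i + m))) := by
  obtain ⟨C, hC, h⟩ := durfee_bound hp
  refine Summable.of_norm_bounded
    ((summable_geometric_of_lt_one (norm_nonneg _) hp).mul_left C) fun i => (h m i _).trans ?_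
  exact mul_le_mul_of_nonneg_left (pow_le_pow_of_le_one (norm_nonneg _) hp.le (he i)) hC.le

lemma durfee_step {p : ℂ} (hp : ‖p‖ < 1) (m : ℕ) :
    ∑' i : ℕ, p ^ (i * (i + m)) / (qPoch p p i * qPoch p p (i + m)) =
    ∑' i : ℕ, p ^ (i * (i + (m + 1))) / (qPoch p p i * qPoch p p (i + (m + 1))) := by
  have sA : ∀ m, Summable (fun i : ℕ => p ^ (i * (i + m)) / (qPoch p p i * qPoch p p (i + m))) :=
    fun m => durfee_summable hp m (fun i => i * (i + m)) (fun i => by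
      rcases Nat.eq_zero_or_pos i with rfl | h
      · simp
      · nlinarith)
  have sB : ∀ m, Summable (fun i : ℕ => p ^ (i * (i + m) + i) / (qPoch p p i * qPoch p p (i + m))) :=
    fun m => durfee_summable hp m (fun i => i * (i + m) + i) (fun i => by simp)
  have h1 : ∑' i : ℕ, p ^ (i * (i + m)) / (qPoch p p i * qPoch p p (i + m)) -
      ∑' i : ℕ, p ^ (i * (i + m) + i) / (qPoch p p i * qPoch p p (i + m)) =
      p ^ (m + 1) * ∑' i : ℕ, p ^ (i * (i + (m + 1)) + i) / (qPoch p p i * qPoch p p (i + (m + 1))) := by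
    rw [← (sA m).tsum_sub (sB m), ((sA m).sub (sB m)).tsum_eq_zero_add, ← tsum_mul_left]
    simp only [zero_mul, add_zero, sub_self, zero_add]
    apply tsum_congr
    intro i
    rw [show i + 1 + m = i + (m + 1) by ring, qPoch_pp_succ]
    have := qPoch_pp_ne hp i
    have := qPoch_pp_ne hp (i + (m + 1))
    have := one_sub_pow_ne hp (n := i + 1) (by simp)
    rw [show (i + 1) * (i + (m + 1)) = i * (i + (m + 1)) + i + (m + 1) by ring]
    field_simp
    ring
  have h2 : ∑' i : ℕ, p ^ (i * (i + (m + 1))) / (qPoch p p i * qPoch p p (i + (m + 1))) -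
      p ^ (m + 1) * ∑' i : ℕ, p ^ (i * (i + (m + 1)) + i) / (qPoch p p i * qPoch p p (i + (m + 1))) =
      ∑' i : ℕ, p ^ (i * (i + m) + i) / (qPoch p p i * qPoch p p (i + m)) := by
    rw [← tsum_mul_left, ← (sA (m + 1)).tsum_sub ((sB (m + 1)).mul_left _)]
    apply tsum_congr
    intro i
    rw [show i + (m + 1) = (i + m) + 1 by ring, qPoch_pp_succ]
    have := qPoch_pp_ne hp i
    have := qPoch_pp_ne hp (i + m)
    have := one_sub_pow_ne hp (n := i + m + 1) (by simp)
    field_simp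
    ring
  linear_combination h1 - h2

lemma durfee {p : ℂ} (hp : ‖p‖ < 1) (m : ℕ) :
    ∑' i : ℕ, p ^ (i * (i + m)) / (qPoch p p i * qPoch p p (i + m)) = (qPochInf p p)⁻¹ := by
  set D : ℕ → ℂ := fun m => ∑' i : ℕ, p ^ (i * (i + m)) / (qPoch p p i * qPoch p p (i + m)) with hD
  have hc : ∀ n, D (m + n) = D m := by
    intro n
    induction n with
    | zero => rfl
    | succ n ih => rw [← ih]; exact (durfee_step hp (m + n)).symm
  have hlim : Tendsto D atTop (𝓝 (qPochInf p p)⁻¹) := by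
    have h0 : ∑' n : ℕ, (if n = 0 then (qPochInf p p)⁻¹ else 0) = (qPochInf p p)⁻¹ := by simp
    rw [← h0]
    obtain ⟨C, hC, h⟩ := durfee_bound hp
    apply tendsto_tsum_of_dominated_convergence
      ((summable_geometric_of_lt_one (norm_nonneg _) hp).mul_left C)
    · intro i
      rcases Nat.eq_zero_or_pos i with rfl | hi
      · simpa [qPoch_zero] using (qPoch_tendsto p hp).inv₀ (qPp_ne hp)
      · rw [if_neg hi.ne']
        have hz := (tendsto_pow_atTop_nhds_zero_of_lt_one (norm_nonneg _) hp).const_mul C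
        rw [mul_zero] at hz
        refine squeeze_zero_norm (fun n => (h n i _).trans ?_) hz
        exact mul_le_mul_of_nonneg_left
          (pow_le_pow_of_le_one (norm_nonneg _) hp.le (by nlinarith)) hC.le
    · filter_upwards with n i
      refine (h n i _).trans ?_
      refine mul_le_mul_of_nonneg_left (pow_le_pow_of_le_one (norm_nonneg _) hp.le ?_) hC.le
      rcases Nat.eq_zero_or_pos i with rfl | h
      · simp
      · nlinarith
  have h2 := hlim.comp (tendsto_add_atTop_nat m)
  refine tendsto_nhds_unique (tendsto_const_nhds.congr fun n => ?_) h2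
  simp only [Function.comp]
  rw [add_comm, hc]

def diffEquiv : ℕ × ℕ ≃ ℤ × ℕ where
  toFun x := ((x.1 : ℤ) - x.2, min x.1 x.2)
  invFun y := (y.2 + y.1.toNat, y.2 + (-y.1).toNat)
  left_inv x := by
    ext <;> simp <;> omega
  right_inv y := by
    ext <;> simp <;> omega

lemma group_diff {p : ℂ} (hp : ‖p‖ < 1) (F : ℤ → ℂ)
    (hs : Summable fun x : ℕ × ℕ => F ((x.1 : ℤ) - x.2) *
      (p ^ (x.1 * x.2) / (qPoch p p x.1 * qPoch p p x.2))) :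
    Summable F ∧ ∑' x : ℕ × ℕ, F ((x.1 : ℤ) - x.2) *
      (p ^ (x.1 * x.2) / (qPoch p p x.1 * qPoch p p x.2)) = (∑' c, F c) * (qPochInf p p)⁻¹ := by
  have key : ∀ c : ℤ, ∑' m : ℕ, (p ^ ((m + c.toNat) * (m + (-c).toNat)) /
      (qPoch p p (m + c.toNat) * qPoch p p (m + (-c).toNat))) = (qPochInf p p)⁻¹ := by
    intro c
    rcases le_total 0 c with h | h
    · have : (-c).toNat = 0 := by omega
      rw [this, ← durfee hp c.toNat]
      apply tsum_congr
      intro m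
      rw [mul_comm, mul_comm (qPoch _ _ _)]; simp
    · have : c.toNat = 0 := by omega
      rw [this, ← durfee hp (-c).toNat]
      simp
  have hs' := (diffEquiv.symm.summable_iff).mpr hs
  have e : (fun x : ℕ × ℕ => F ((x.1 : ℤ) - x.2) *
      (p ^ (x.1 * x.2) / (qPoch p p x.1 * qPoch p p x.2))) ∘ diffEquiv.symm =
      fun y : ℤ × ℕ => F y.1 * (p ^ ((y.2 + y.1.toNat) * (y.2 + (-y.1).toNat)) /
      (qPoch p p (y.2 + y.1.toNat) * qPoch p p (y.2 + (-y.1).toNat))) := by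
    funext y
    simp only [Function.comp, diffEquiv, Equiv.coe_fn_symm_mk]
    congr 2
    push_cast
    omega
  rw [e] at hs'
  have h1 := hs'.prod
  simp only [tsum_mul_left, key] at h1
  refine ⟨?_, ?_⟩
  · exact (summable_mul_right_iff (inv_ne_zero (qPp_ne hp))).mp h1
  · rw [← diffEquiv.symm.tsum_eq]
    have e' := fun y => congrFun e y
    simp only [Function.comp] at e'
    rw [tsum_congr e', hs'.tsum_prod]
    simp only [tsum_mul_left, key]
    rw [tsum_mul_right]

lemma tri (n : ℕ) : ((n * (n - 1) / 2 : ℕ) : ℤ) = (n : ℤ) * (n - 1) / 2 := by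
  cases n with
  | zero => simp
  | succ n => push_cast; simp

lemma tri2 (n : ℤ) : 2 * (n * (n - 1) / 2) = n * (n - 1) :=
  Int.mul_ediv_cancel' (Int.even_mul_pred_self n).two_dvd

lemma jtp_term {p z : ℂ} (hp0 : p ≠ 0) (hp : ‖p‖ < 1) (hz : z ≠ 0) (a i : ℕ) :
    ((-z) ^ a * p ^ (a * (a - 1) / 2) / qPoch p p a) *
      ((-(p / z)) ^ i * p ^ (i * (i - 1) / 2) / qPoch p p i) =
      ((-z) ^ ((a : ℤ) - i) * p ^ (((a : ℤ) - i) * ((a : ℤ) - i - 1) / 2)) *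
      (p ^ (a * i) / (qPoch p p a * qPoch p p i)) := by
  have hz' : -z ≠ 0 := neg_ne_zero.mpr hz
  have h1 : (-(p / z)) = p * (-z)⁻¹ := by field_simp
  have this : ((a : ℤ) - i) * ((a : ℤ) - i - 1) / 2 + ((a * i : ℕ) : ℤ) =
      (a : ℤ) * (a - 1) / 2 + (i + (i : ℤ) * (i - 1) / 2) := by
    have h1 := tri2 ((a : ℤ) - i)
    have h2 := tri2 (a : ℤ)
    have h3 := tri2 (i : ℤ)
    push_cast
    linarith
  have h4 : p ^ (((a : ℤ) - i) * ((a : ℤ) - i - 1) / 2) * p ^ (a * i) =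
      p ^ (a * (a - 1) / 2) * (p ^ i * p ^ (i * (i - 1) / 2)) := by
    simp only [← zpow_natCast]
    rw [tri, tri]
    rw [← zpow_add₀ hp0, ← zpow_add₀ hp0, ← zpow_add₀ hp0, this]
  rw [h1, mul_pow, inv_pow, zpow_sub₀ hz', zpow_natCast, zpow_natCast]
  have := qPoch_pp_ne hp a
  have := qPoch_pp_ne hp i
  have := pow_ne_zero i hz'
  generalize p ^ (((a : ℤ) - i) * ((a : ℤ) - i - 1) / 2) = A at *
  generalize p ^ (a * i) = B at *
  generalize p ^ (a * (a - 1) / 2) = C at *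
  generalize p ^ (i * (i - 1) / 2) = D at *
  generalize p ^ i = E at *
  generalize (-z) ^ i = G at *
  generalize (-z) ^ a = H at *
  rw [div_mul_div_comm, ← mul_div_assoc]
  congr 1
  linear_combination -(H * G⁻¹) * h4

/-- Jacobi triple product -/
lemma jtp {p z : ℂ} (hp0 : p ≠ 0) (hp : ‖p‖ < 1) (hz : z ≠ 0) :
    Summable (fun n : ℤ => (-z) ^ n * p ^ (n * (n - 1) / 2)) ∧
    ∑' n : ℤ, (-z) ^ n * p ^ (n * (n - 1) / 2) =
      qPochInf z p * qPochInf (p / z) p * qPochInf p p := by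
  have s1 := euler_summable z hp
  have s2 := euler_summable (p / z) hp
  obtain ⟨F, hF⟩ : ∃ F : ℤ → ℂ, ∀ n, F n = (-z) ^ n * p ^ (n * (n - 1) / 2) := ⟨_, fun n => rfl⟩
  simp only [← hF]
  have e : ∀ x : ℕ × ℕ, ((-z) ^ x.1 * p ^ (x.1 * (x.1 - 1) / 2) / qPoch p p x.1) *
      ((-(p / z)) ^ x.2 * p ^ (x.2 * (x.2 - 1) / 2) / qPoch p p x.2) =
      F ((x.1 : ℤ) - x.2) *
      (p ^ (x.1 * x.2) / (qPoch p p x.1 * qPoch p p x.2)) := by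
    intro x
    rw [hF]
    exact jtp_term hp0 hp hz x.1 x.2
  have hs : Summable fun x : ℕ × ℕ => F ((x.1 : ℤ) - x.2) *
      (p ^ (x.1 * x.2) / (qPoch p p x.1 * qPoch p p x.2)) :=
    (summable_mul_of_summable_norm s1 s2).congr fun x => e x
  obtain ⟨g1, g2⟩ := group_diff hp F hs
  refine ⟨g1, ?_⟩
  rw [← tsum_congr e, ← tsum_mul_tsum_of_summable_norm s1 s2, euler _ hp, euler _ hp] at g2
  rw [g2, mul_assoc, inv_mul_cancel₀ (qPp_ne hp), mul_one]

lemma tsum_mod (m : ℕ) [NeZero m] (f : ℤ → ℂ) (hf : Summable f) :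
    ∑' n, f n = ∑ r : Fin m, ∑' t : ℤ, f (m * t + (r : ℕ)) := by
  have hs := ((Int.divModEquiv m).symm.summable_iff).mpr hf
  rw [← (Int.divModEquiv m).symm.tsum_eq, ← (Equiv.prodComm _ _).tsum_eq]
  have hs2 : Summable (fun c : Fin m × ℤ => f ((Int.divModEquiv m).symm ((Equiv.prodComm _ _) c))) :=
    ((Equiv.prodComm (Fin m) ℤ).summable_iff).mpr hs
  rw [Summable.tsum_prod hs2, tsum_fintype]
  apply Finset.sum_congr rfl
  intro r _
  apply tsum_congr
  intro t
  simp [Int.divModEquiv]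
  ring_nf

lemma neg_zpow' (q : ℂ) (e : ℤ) : (-q) ^ e = (-1) ^ e * q ^ e := by
  rw [← mul_zpow]; simp

/-- theta series of `J_{a,2h}` -/
lemma jam_theta {q : ℂ} (hq0 : q ≠ 0) (hq : ‖q‖ < 1) {a h : ℕ} (hh : h ≠ 0) (ha : a ≤ 2 * h) :
    Summable (fun n : ℤ => (-1) ^ n * q ^ (a * n + h * (n * (n - 1)))) ∧
    ∑' n : ℤ, (-1) ^ n * q ^ (a * n + h * (n * (n - 1))) = Jam q a (2 * h) := by
  have := jtp (p := q ^ (2 * h)) (z := q ^ a) (pow_ne_zero _ hq0)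
    (norm_pow_lt hq (by omega)) (pow_ne_zero _ hq0)
  have e : ∀ n : ℤ, (-q ^ a) ^ n * (q ^ (2 * h)) ^ (n * (n - 1) / 2) =
      (-1) ^ n * q ^ (a * n + h * (n * (n - 1))) := by
    intro n
    rw [neg_zpow', mul_assoc, ← zpow_natCast, ← zpow_natCast, ← zpow_mul, ← zpow_mul,
      ← zpow_add₀ hq0]
    congr 2
    have := tri2 n
    push_cast
    linear_combination (h : ℤ) * this
  simp only [e] at this
  refine ⟨this.1, this.2.trans ?_⟩
  unfold Jam
  have hd : q ^ (2 * h) / q ^ a = q ^ (2 * h - a) := by rw [pow_sub₀ _ hq0 ha, div_eq_mul_inv]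
  rw [hd]

lemma pent {X : ℂ} (hX0 : X ≠ 0) (hX : ‖X‖ < 1) :
    Summable (fun n : ℤ => (-1) ^ n * X ^ (n + 3 * (n * (n - 1) / 2))) ∧
    ∑' n : ℤ, (-1) ^ n * X ^ (n + 3 * (n * (n - 1) / 2)) = qPochInf X X := by
  have := jtp (p := X ^ 3) (z := X) (pow_ne_zero _ hX0)
    (norm_pow_lt hX (by omega)) hX0
  have e : ∀ n : ℤ, (-X) ^ n * (X ^ 3) ^ (n * (n - 1) / 2) =
      (-1) ^ n * X ^ (n + 3 * (n * (n - 1) / 2)) := by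
    intro n
    rw [neg_zpow', mul_assoc, ← zpow_natCast, ← zpow_mul, ← zpow_add₀ hX0]
    norm_num
  simp only [e] at this
  refine ⟨this.1, this.2.trans ?_⟩
  rw [qPochInf_split X hX three_ne_zero]
  simp only [Finset.prod_range_succ, Finset.prod_range_zero]
  have : X ^ 3 / X = X * X ^ 1 := by field_simp
  rw [this]
  simp only [pow_zero, mul_one, one_mul]
  rw [show X * X ^ 2 = X ^ 3 by ring]

lemma sgn_even {e k : ℤ} (h : e = 2 * k) : (-1 : ℂ) ^ e = 1 := by
  rw [h, zpow_mul]; norm_num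
lemma sgn_odd {e k : ℤ} (h : e = 2 * k + 1) : (-1 : ℂ) ^ e = -1 := by
  rw [h, zpow_add₀ (by norm_num), zpow_mul]; norm_num

lemma pent4 {x q : ℂ} (hx0 : x ≠ 0) (hx : ‖x‖ < 1) (hq : x ^ 2 = q) :
    qPochInf (-x) q * qPochInf q q =
      ((∑' t : ℤ, q ^ (12 * t ^ 2 - t)) - ∑' t : ℤ, q ^ (12 * t ^ 2 + 7 * t + 1)) +
      x * ((∑' t : ℤ, q ^ (12 * t ^ 2 + 5 * t)) - ∑' t : ℤ, q ^ (12 * t ^ 2 + 13 * t + 3)) := by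
  have hX : ‖-x‖ < 1 := by simpa using hx
  obtain ⟨s, h⟩ := pent (neg_ne_zero.mpr hx0) hX
  have hsp := qPochInf_split (-x) hX two_ne_zero
  simp only [Finset.prod_range_succ, Finset.prod_range_zero] at hsp
  rw [show (-x) ^ 2 = q by rw [neg_sq, hq], show (-x) * (-x) ^ 1 = q by rw [← hq]; ring,
    pow_zero, mul_one, one_mul] at hsp
  rw [← hsp, ← h, tsum_mod 4 _ s]
  have hq2 : ∀ k : ℤ, x ^ (2 * k) = q ^ k := by
    intro k; rw [zpow_mul, ← hq]; norm_cast
  have hx1 : ∀ k : ℤ, x ^ (2 * k + 1) = x * q ^ k := by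
    intro k; rw [zpow_add₀ hx0, hq2, zpow_one, mul_comm]
  have T : ∀ n k : ℤ, n * (n - 1) = 2 * k → n * (n - 1) / 2 = k := by
    intro n k h; rw [h]; simp
  simp only [Fin.sum_univ_four]
  have r0 : ∀ t : ℤ, (-1 : ℂ) ^ (4 * t) * (-x) ^ (4 * t + 3 * (4 * t * (4 * t - 1) / 2)) =
      q ^ (12 * t ^ 2 - t) := by
    intro t
    rw [T _ (8 * t ^ 2 - 2 * t) (by ring), neg_zpow' x, sgn_even (k := 2 * t) (by ring),
      sgn_even (k := 12 * t ^ 2 - t) (by ring), ← hq2]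
    ring_nf
  have r1 : ∀ t : ℤ, (-1 : ℂ) ^ (4 * t + 1) * (-x) ^ (4 * t + 1 + 3 * ((4 * t + 1) * (4 * t + 1 - 1) / 2)) =
      x * q ^ (12 * t ^ 2 + 5 * t) := by
    intro t
    rw [T _ (8 * t ^ 2 + 2 * t) (by ring), neg_zpow' x, sgn_odd (k := 2 * t) (by ring),
      sgn_odd (k := 12 * t ^ 2 + 5 * t) (by ring), ← hx1]
    ring_nf
  have r2 : ∀ t : ℤ, (-1 : ℂ) ^ (4 * t + 2) * (-x) ^ (4 * t + 2 + 3 * ((4 * t + 2) * (4 * t + 2 - 1) / 2)) =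
      - (x * q ^ (12 * t ^ 2 + 11 * t + 2)) := by
    intro t
    rw [T _ (8 * t ^ 2 + 6 * t + 1) (by ring), neg_zpow' x, sgn_even (k := 2 * t + 1) (by ring),
      sgn_odd (k := 12 * t ^ 2 + 11 * t + 2) (by ring), ← hx1]
    ring_nf
  have r3 : ∀ t : ℤ, (-1 : ℂ) ^ (4 * t + 3) * (-x) ^ (4 * t + 3 + 3 * ((4 * t + 3) * (4 * t + 3 - 1) / 2)) =
      - q ^ (12 * t ^ 2 + 17 * t + 6) := by
    intro t
    rw [T _ (8 * t ^ 2 + 10 * t + 3) (by ring), neg_zpow' x, sgn_odd (k := 2 * t + 1) (by ring),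
      sgn_even (k := 12 * t ^ 2 + 17 * t + 6) (by ring), ← hq2]
    ring_nf
  have e2 : ∑' t : ℤ, q ^ (12 * t ^ 2 + 11 * t + 2) = ∑' t : ℤ, q ^ (12 * t ^ 2 + 13 * t + 3) := by
    rw [← (Equiv.subLeft (-1 : ℤ)).tsum_eq]
    apply tsum_congr
    intro t
    simp only [Equiv.subLeft_apply]
    congr 1
    ring
  have e3 : ∑' t : ℤ, q ^ (12 * t ^ 2 + 17 * t + 6) = ∑' t : ℤ, q ^ (12 * t ^ 2 + 7 * t + 1) := by
    rw [← (Equiv.subLeft (-1 : ℤ)).tsum_eq]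
    apply tsum_congr
    intro t
    simp only [Equiv.subLeft_apply]
    congr 1
    ring
  have c0 : ((4 : ℕ) : ℤ) = 4 := rfl
  have v0 : (((0 : Fin 4) : ℕ) : ℤ) = 0 := rfl
  have v1 : (((1 : Fin 4) : ℕ) : ℤ) = 1 := rfl
  have v2 : (((2 : Fin 4) : ℕ) : ℤ) = 2 := rfl
  have v3 : (((3 : Fin 4) : ℕ) : ℤ) = 3 := rfl
  simp only [c0, v0, v1, v2, v3, add_zero, r0, r1, r2, r3, tsum_neg, tsum_mul_left, e2, e3]
  ring

/-- quintuple product, specialised -/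
lemma quint {q : ℂ} (hq0 : q ≠ 0) (hq : ‖q‖ < 1) {s s' : ℕ} (hs : s' + 2 * s = 8) :
    Jam q s 8 * Jam q s' 16 = J q 16 *
      ((∑' t : ℤ, q ^ (12 * t ^ 2 + (3 * s - 4) * t)) -
        ∑' t : ℤ, q ^ (12 * t ^ 2 + (3 * s + 4) * t + s)) := by
  obtain ⟨s1, h1⟩ := jam_theta hq0 hq (a := s) (h := 4) (by norm_num) (by omega)
  obtain ⟨s2, h2⟩ := jam_theta hq0 hq (a := s') (h := 8) (by norm_num) (by omega)
  norm_num at h1 h2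
  norm_num at s1 s2
  have hs' : (s' : ℤ) = 8 - 2 * s := by omega
  rw [← h1, ← h2, tsum_mul_tsum_of_summable_norm s1.norm s2.norm]
  have sm := summable_mul_of_summable_norm s1.norm s2.norm
  let sh : ℤ × ℤ ≃ ℤ × ℤ :=
    { toFun := fun y => (y.1 + 2 * y.2, y.2)
      invFun := fun y => (y.1 - 2 * y.2, y.2)
      left_inv := fun y => by simp
      right_inv := fun y => by simp }
  have sm2 := (sh.summable_iff).mpr sm
  rw [← sh.tsum_eq]
  have e : ∀ y : ℤ × ℤ, ((-1 : ℂ) ^ (sh y).1 * q ^ (s * (sh y).1 + 4 * ((sh y).1 * ((sh y).1 - 1)))) *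
      ((-1) ^ (sh y).2 * q ^ (s' * (sh y).2 + 8 * ((sh y).2 * ((sh y).2 - 1)))) =
      (-1) ^ (y.1 + y.2) * q ^ (s * y.1 + 4 * (y.1 * (y.1 - 1)) + 8 * (3 * y.2 ^ 2 - y.2 + 2 * y.2 * y.1)) := by
    rintro ⟨M, b⟩
    simp only [sh, Equiv.coe_fn_mk]
    rw [mul_mul_mul_comm, ← zpow_add₀ hq0, ← zpow_add₀ (by norm_num), hs']
    congr 1
    · rw [show M + 2 * b + b = M + b + 2 * b by ring, zpow_add₀ (by norm_num),
        sgn_even (k := b) rfl, mul_one]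
    · congr 1
      ring
  have sm3 : Summable fun y : ℤ × ℤ => (-1 : ℂ) ^ (y.1 + y.2) * q ^ (s * y.1 + 4 * (y.1 * (y.1 - 1)) +
      8 * (3 * y.2 ^ 2 - y.2 + 2 * y.2 * y.1)) := sm2.congr fun y => e y
  rw [tsum_congr e, sm3.tsum_prod, tsum_mod 3 _ sm3.prod]
  have q16 : ‖q ^ 16‖ < 1 := norm_pow_lt hq (by norm_num)
  have P0 : ∑' b : ℤ, (-1 : ℂ) ^ b * q ^ (24 * b ^ 2 - 8 * b) = J q 16 := by
    unfold J
    rw [← (pent (pow_ne_zero 16 hq0) q16).2]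
    apply tsum_congr
    intro b
    rw [← zpow_natCast, ← zpow_mul]
    congr 2
    have := tri2 b
    push_cast
    linear_combination -24 * this
  have P1 : ∑' b : ℤ, (-1 : ℂ) ^ b * q ^ (24 * b ^ 2 + 8 * b) = J q 16 := by
    rw [← P0, ← (Equiv.neg ℤ).tsum_eq]
    apply tsum_congr
    intro b
    simp only [Equiv.neg_apply]
    congr 1
    · rw [zpow_neg, ← inv_zpow]; norm_num
    · congr 1; ring
  have P2 : ∑' b : ℤ, (-1 : ℂ) ^ b * q ^ (24 * b ^ 2 + 24 * b) = 0 := by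
    have : ∑' b : ℤ, (-1 : ℂ) ^ b * q ^ (24 * b ^ 2 + 24 * b) =
        - ∑' b : ℤ, (-1 : ℂ) ^ b * q ^ (24 * b ^ 2 + 24 * b) := by
      conv_lhs => rw [← (Equiv.subLeft (-1 : ℤ)).tsum_eq]
      rw [← tsum_neg]
      apply tsum_congr
      intro b
      simp only [Equiv.subLeft_apply]
      rw [← neg_mul]
      congr 1
      · rw [zpow_sub₀ (by norm_num)]
        have : ((-1 : ℂ) ^ b) * ((-1 : ℂ) ^ b) = 1 := by
          rw [← mul_zpow]; norm_num
        have hne : ((-1 : ℂ) ^ b) ≠ 0 := zpow_ne_zero _ (by norm_num)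
        field_simp
        norm_num
        linear_combination -this
      · congr 1; ring
    linear_combination this / 2
  have c0 : ((3 : ℕ) : ℤ) = 3 := rfl
  have v0 : (((0 : Fin 3) : ℕ) : ℤ) = 0 := rfl
  have v1 : (((1 : Fin 3) : ℕ) : ℤ) = 1 := rfl
  have v2 : (((2 : Fin 3) : ℕ) : ℤ) = 2 := rfl
  simp only [Fin.sum_univ_three, c0, v0, v1, v2, add_zero]
  have R0 : ∀ t : ℤ, ∑' b : ℤ, (-1 : ℂ) ^ (3 * t + b) * q ^ (s * (3 * t) + 4 * ((3 * t) * (3 * t - 1)) +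
      8 * (3 * b ^ 2 - b + 2 * b * (3 * t))) = q ^ (12 * t ^ 2 + (3 * s - 4) * t) * J q 16 := by
    intro t
    rw [← P0, ← tsum_mul_left, ← (Equiv.subRight t).tsum_eq]
    apply tsum_congr
    intro b
    simp only [Equiv.subRight_apply]
    rw [mul_left_comm (q ^ _), ← zpow_add₀ hq0, show 3 * t + (b - t) = 2 * t + b by ring,
      zpow_add₀ (by norm_num), sgn_even (k := t) rfl, one_mul]
    congr 2
    ring
  have R1 : ∀ t : ℤ, ∑' b : ℤ, (-1 : ℂ) ^ (3 * t + 1 + b) * q ^ (s * (3 * t + 1) + 4 * ((3 * t + 1) * (3 * t + 1 - 1)) +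
      8 * (3 * b ^ 2 - b + 2 * b * (3 * t + 1))) = - (q ^ (12 * t ^ 2 + (3 * s + 4) * t + s) * J q 16) := by
    intro t
    rw [← P1, ← tsum_mul_left, ← tsum_neg, ← (Equiv.subRight t).tsum_eq]
    apply tsum_congr
    intro b
    simp only [Equiv.subRight_apply]
    rw [mul_left_comm (q ^ _), ← zpow_add₀ hq0, show 3 * t + 1 + (b - t) = 2 * t + 1 + b by ring,
      zpow_add₀ (by norm_num), sgn_odd (k := t) rfl, ← neg_mul, neg_one_mul]
    congr 2
    ring
  have R2 : ∀ t : ℤ, ∑' b : ℤ, (-1 : ℂ) ^ (3 * t + 2 + b) * q ^ (s * (3 * t + 2) + 4 * ((3 * t + 2) * (3 * t + 2 - 1)) +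
      8 * (3 * b ^ 2 - b + 2 * b * (3 * t + 2))) = 0 := by
    intro t
    rw [← mul_zero (q ^ (12 * t ^ 2 + (3 * s + 12) * t + 2 * s + 8)), ← P2, ← tsum_mul_left,
      ← (Equiv.subRight t).tsum_eq]
    apply tsum_congr
    intro b
    simp only [Equiv.subRight_apply]
    rw [mul_left_comm (q ^ _), ← zpow_add₀ hq0, show 3 * t + 2 + (b - t) = 2 * (t + 1) + b by ring,
      zpow_add₀ (by norm_num), sgn_even (k := t + 1) rfl, one_mul]
    congr 2
    ring
  simp only [R0, R1, R2, tsum_zero, add_zero, tsum_neg, tsum_mul_right]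
  ring

/-- reciprocal of `(q²;q²)_n` -/
noncomputable def cc (q : ℂ) (n : ℕ) : ℂ := (qPoch (q ^ 2) (q ^ 2) n)⁻¹

lemma cc_zero (q : ℂ) : cc q 0 = 1 := by simp [cc, qPoch]

lemma cc_succ {q : ℂ} (hq : ‖q‖ < 1) (n : ℕ) : (1 - q ^ (2 * (n + 1))) * cc q (n + 1) = cc q n := by
  unfold cc
  have h2 : ‖q ^ 2‖ < 1 := norm_pow_lt hq two_ne_zero
  have a := one_sub_pow_ne h2 (Nat.succ_ne_zero n)
  have b := qPoch_pp_ne h2 n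
  rw [qPoch_pp_succ, pow_mul]
  simp only [Nat.succ_eq_add_one] at a
  field_simp

noncomputable def XX (q : ℂ) (t : ℤ) (N : ℕ) : ℂ :=
  ∑ x ∈ Finset.HasAntidiagonal.antidiagonal N, q ^ (((x.1 : ℤ) - x.2) ^ 2 + t * ((x.1 : ℤ) - x.2)) * (cc q x.1 * cc q x.2)

lemma XX_zero (q : ℂ) (t : ℤ) : XX q t 0 = 1 := by
  simp [XX, cc_zero]

lemma XX_neg (q : ℂ) (t : ℤ) (N : ℕ) : XX q (-t) N = XX q t N := by
  unfold XX
  rw [← Finset.Nat.sum_antidiagonal_swap]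
  apply Finset.sum_congr rfl
  intro x _
  simp only [Prod.fst_swap, Prod.snd_swap]
  rw [mul_comm (cc q x.2)]
  congr 2
  ring

lemma XX_rec {q : ℂ} (hq0 : q ≠ 0) (hq : ‖q‖ < 1) (t : ℤ) (N : ℕ) :
    XX q t (N + 1) - q ^ (N + 1) * XX q (t + 1) (N + 1) = q ^ (1 + t) * XX q (t + 2) N := by
  unfold XX
  rw [Finset.mul_sum, ← Finset.sum_sub_distrib, Finset.Nat.sum_antidiagonal_succ, Finset.mul_sum]
  have h0 : ∀ y : ℂ, q ^ ((((0 : ℕ) : ℤ) - ((N + 1 : ℕ) : ℤ)) ^ 2 + t * (((0 : ℕ) : ℤ) - ((N + 1 : ℕ) : ℤ))) * y -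
      q ^ (N + 1) * (q ^ ((((0 : ℕ) : ℤ) - ((N + 1 : ℕ) : ℤ)) ^ 2 + (t + 1) * (((0 : ℕ) : ℤ) - ((N + 1 : ℕ) : ℤ))) * y) = 0 := by
    intro y
    rw [← mul_assoc, ← zpow_natCast q (N + 1), ← zpow_add₀ hq0, ← sub_mul]
    convert zero_mul y
    rw [sub_eq_zero]
    congr 1
    push_cast
    ring
  rw [h0, zero_add]
  apply Finset.sum_congr rfl
  rintro ⟨k, l⟩ h
  have h : k + l = N := by simpa using h
  subst h
  simp only
  rw [← cc_succ hq k, ← mul_assoc (q ^ (k + l + 1)), ← mul_assoc (q ^ (1 + t)),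
    ← zpow_natCast q (k + l + 1), ← zpow_add₀ hq0, ← zpow_add₀ hq0, ← zpow_natCast q (2 * (k + 1))]
  have e1 : ((k + l + 1 : ℕ) : ℤ) + ((((k + 1 : ℕ) : ℤ) - l) ^ 2 + (t + 1) * (((k + 1 : ℕ) : ℤ) - l))
     = (1 + t + (((k : ℤ) - l) ^ 2 + (t + 2) * ((k : ℤ) - l))) + ((2 * (k + 1) : ℕ) : ℤ) := by
    push_cast; ring
  have e2 : ((((k + 1 : ℕ) : ℤ) - l) ^ 2 + t * (((k + 1 : ℕ) : ℤ) - l))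
     = (1 + t + (((k : ℤ) - l) ^ 2 + (t + 2) * ((k : ℤ) - l))) := by
    push_cast; ring
  rw [e1, e2, zpow_add₀ hq0 _ (((2 * (k + 1) : ℕ) : ℤ))]
  ring

lemma cc_rescale (r : ℂ) (f : PowerSeries ℂ) :
    PowerSeries.constantCoeff (PowerSeries.rescale r f) = PowerSeries.constantCoeff f := by
  rw [← PowerSeries.coeff_zero_eq_constantCoeff_apply, PowerSeries.coeff_rescale]
  simp

lemma rescale_C' (r c : ℂ) : PowerSeries.rescale r (PowerSeries.C c) = PowerSeries.C c := by
  ext n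
  rw [PowerSeries.coeff_rescale, PowerSeries.coeff_C]
  split_ifs with h
  · simp [h]
  · simp

open PowerSeries in
lemma XX_gf {q : ℂ} (hq0 : q ≠ 0) (hq : ‖q‖ < 1) (t : ℤ) :
    PowerSeries.mk (XX q t) - rescale q (PowerSeries.mk (XX q (t + 1))) =
      X * (C (q ^ (1 + t)) * PowerSeries.mk (XX q (t + 2))) := by
  ext n
  cases n with
  | zero => simp [XX_zero, cc_rescale]
  | succ n => simp [coeff_succ_X_mul, coeff_rescale, XX_rec hq0 hq]

open PowerSeries in
lemma ps_unique {q : ℂ} (hq : ‖q‖ < 1) (D : PowerSeries ℂ) (h0 : coeff 0 D = 0)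
    (h : (1 - C q * X) * (1 - C (q ^ 2) * X) * D = (1 + C (q ^ 3) * X) * rescale (q ^ 2) D) : D = 0 := by
  have h2 : ‖q ^ 2‖ < 1 := norm_pow_lt hq two_ne_zero
  have h' : D - X * (C (q + q ^ 2) * D) + X * (X * (C (q ^ 3) * D)) =
      rescale (q ^ 2) D + X * (C (q ^ 3) * rescale (q ^ 2) D) := by
    rw [show (q ^ 3 : ℂ) = q * q ^ 2 by ring] at *
    simp only [map_add, map_mul] at *
    linear_combination h
  have key : ∀ n, coeff n D = 0 ∧ coeff (n + 1) D = 0 := by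
    intro n
    induction n with
    | zero =>
      refine ⟨h0, ?_⟩
      have := congrArg (coeff 1) h'
      have a := one_sub_pow_ne h2 one_ne_zero
      rw [show (1 : ℕ) = 0 + 1 from rfl] at this
      simp only [map_sub, map_add, add_mul, coeff_succ_X_mul, coeff_rescale, coeff_C_mul, h0, coeff_zero_X_mul] at this
      apply (mul_eq_zero.mp _).resolve_left a
      linear_combination this
    | succ n ih =>
      refine ⟨ih.2, ?_⟩
      have := congrArg (coeff (n + 1 + 1)) h'
      have a := one_sub_pow_ne h2 (Nat.succ_ne_zero (n + 1))
      simp only [map_sub, map_add, add_mul, coeff_succ_X_mul, coeff_rescale, coeff_C_mul, ih.1, ih.2] at this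
      apply (mul_eq_zero.mp _).resolve_left a
      simp only [Nat.succ_eq_add_one]
      linear_combination this
  ext n
  simpa using (key n).1

open PowerSeries in
lemma A_gf {q : ℂ} (hq : ‖q‖ < 1) (t : ℕ) :
    PowerSeries.mk (fun a => q ^ (a ^ 2 + t * a) * cc q a) =
      (1 + C (q ^ (t + 1)) * X) * rescale (q ^ 2) (PowerSeries.mk (fun a => q ^ (a ^ 2 + t * a) * cc q a)) := by
  rw [add_mul, one_mul, mul_assoc, mul_left_comm]
  ext n
  cases n with
  | zero => simp [cc_rescale]
  | succ n =>
    simp only [map_add, coeff_succ_X_mul, coeff_rescale, coeff_C_mul, coeff_mk]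
    rw [← cc_succ hq n]
    ring

open PowerSeries in
lemma B_gf {q : ℂ} (hq : ‖q‖ < 1) :
    (1 - C q * X) * PowerSeries.mk (fun b => q ^ b / qPoch q q b) =
      rescale q (PowerSeries.mk (fun b => q ^ b / qPoch q q b)) := by
  rw [sub_mul, one_mul, mul_assoc, mul_left_comm]
  ext n
  cases n with
  | zero => simp [cc_rescale]
  | succ n =>
    simp only [map_sub, coeff_succ_X_mul, coeff_rescale, coeff_C_mul, coeff_mk]
    have a := one_sub_pow_ne hq (Nat.succ_ne_zero n)
    have b := qPoch_pp_ne hq n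
    rw [qPoch_pp_succ]
    simp only [Nat.succ_eq_add_one] at a
    field_simp
    ring

noncomputable def RR (q : ℂ) (N : ℕ) : ℂ :=
  ∑ x ∈ Finset.HasAntidiagonal.antidiagonal N, q ^ (((x.1 : ℤ) - x.2) ^ 2 + 2 * (x.1 : ℤ)) * (cc q x.1 * cc q x.2)

lemma RR_eq {q : ℂ} (hq0 : q ≠ 0) (N : ℕ) : RR q N = q ^ N * XX q 1 N := by
  unfold RR XX
  rw [Finset.mul_sum]
  apply Finset.sum_congr rfl
  rintro ⟨k, l⟩ h
  have h : k + l = N := by simpa using h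
  subst h
  rw [← mul_assoc (q ^ (k + l)), ← zpow_natCast q, ← zpow_add₀ hq0]
  congr 2
  push_cast
  ring

open PowerSeries in
lemma R_gf {q : ℂ} (hq0 : q ≠ 0) (hq : ‖q‖ < 1) :
    (1 - C q * X) * (1 - C (q ^ 4) * X ^ 2) * PowerSeries.mk (RR q) =
      (1 + C (q ^ 3) * X) * rescale (q ^ 2) (PowerSeries.mk (RR q)) := by
  have hR : PowerSeries.mk (RR q) = rescale q (PowerSeries.mk (XX q 1)) := by
    ext n; simp [RR_eq hq0]
  have g1 := XX_gf hq0 hq (-1)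
  have g2 := XX_gf hq0 hq 0
  have g3 := XX_gf hq0 hq (-2)
  have hm1 : XX q (-1) = XX q 1 := funext fun N => XX_neg q 1 N
  have hm2 : XX q (-2) = XX q 2 := funext fun N => XX_neg q 2 N
  norm_num [hm1, hm2] at g1 g2 g3
  rw [← hR] at g2 g3
  have hqq : (C q⁻¹ : PowerSeries ℂ) * C q = 1 := by
    rw [← map_mul, inv_mul_cancel₀ hq0, map_one]
  have g4 : (1 - X ^ 2) * PowerSeries.mk (XX q 0) = (1 + C q * X) * PowerSeries.mk (RR q) := by
    linear_combination g2 + X * C q * g3 + X ^ 2 * PowerSeries.mk (XX q 0) * hqq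
  have g1' := congrArg (rescale q) g1
  have g4' := congrArg (rescale q) (congrArg (rescale q) g4)
  simp only [map_sub, map_mul, map_add, map_pow, map_one, rescale_X] at g1' g4'
  rw [← hR] at g1'
  simp only [rescale_rescale, ← pow_two] at g1' g4'
  simp only [rescale_C'] at g1' g4'
  simp only [map_pow] at *
  linear_combination (1 - C q ^ 4 * X ^ 2) * g1' + g4'

open PowerSeries in
lemma finF {q : ℂ} (hq0 : q ≠ 0) (hq : ‖q‖ < 1) (n : ℕ) :
    ∑ x ∈ Finset.HasAntidiagonal.antidiagonal n, (q ^ (x.1 ^ 2 + 1 * x.1) * cc q x.1) * RR q x.2 =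
    ∑ x ∈ Finset.HasAntidiagonal.antidiagonal n, (q ^ (x.1 ^ 2 + 2 * x.1) * cc q x.1) * (q ^ x.2 / qPoch q q x.2) := by
  have hA := A_gf hq 2
  have hE := A_gf hq 1
  have hB := B_gf hq
  have hR := R_gf hq0 hq
  set A := PowerSeries.mk (fun a => q ^ (a ^ 2 + 2 * a) * cc q a) with dA
  set E := PowerSeries.mk (fun a => q ^ (a ^ 2 + 1 * a) * cc q a) with dE
  set B := PowerSeries.mk (fun b => q ^ b / qPoch q q b) with dB
  set R := PowerSeries.mk (RR q) with dR
  have hB' := congrArg (rescale q) hB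
  simp only [map_sub, map_mul, map_one, rescale_X, rescale_rescale, ← pow_two, rescale_C'] at hB'
  have hV : (1 - C q * X) * (1 - C (q ^ 2) * X) * (A * B) =
      (1 + C (q ^ 3) * X) * rescale (q ^ 2) (A * B) := by
    rw [map_mul]
    simp only [map_pow] at *
    norm_num at hA
    linear_combination (1 - C q * X) * (1 - C q ^ 2 * X) * B * hA +
      (1 + C q ^ 3 * X) * rescale (q ^ 2) A * ((1 - C q ^ 2 * X) * hB + hB')
  have hne : (1 + C (q ^ 2) * X : PowerSeries ℂ) ≠ 0 := by
    intro h
    have := congrArg (coeff 0) h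
    simp at this
  have hU : (1 - C q * X) * (1 - C (q ^ 2) * X) * (E * R) =
      (1 + C (q ^ 3) * X) * rescale (q ^ 2) (E * R) := by
    apply mul_left_cancel₀ hne
    rw [map_mul]
    simp only [map_pow] at *
    norm_num at hE
    linear_combination E * hR + (1 + C q ^ 3 * X) * rescale (q ^ 2) R * hE
  have hD := ps_unique hq (E * R - A * B) (by
      simp [dA, dE, dB, dR, cc_zero, RR, qPoch]) (by
      rw [map_sub]; linear_combination hU - hV)
  have := congrArg (coeff n) (sub_eq_zero.mp hD)
  rw [coeff_mul, coeff_mul] at this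
  simpa only [dA, dE, dB, dR, coeff_mk] using this

lemma J_ne {q : ℂ} (hq : ‖q‖ < 1) {m : ℕ} (hm : m ≠ 0) : J q m ≠ 0 := qPp_ne (norm_pow_lt hq hm)

lemma psi_prod {q : ℂ} (hq0 : q ≠ 0) (hq : ‖q‖ < 1) :
    Summable (fun c : ℤ => q ^ (2 * c ^ 2 + 2 * c)) ∧
    ∑' c : ℤ, q ^ (2 * c ^ 2 + 2 * c) = 2 * J q 8 ^ 2 / J q 4 := by
  have h4 : ‖q ^ 4‖ < 1 := norm_pow_lt hq (by norm_num)
  have h40 : q ^ 4 ≠ 0 := pow_ne_zero _ hq0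
  have := jtp h40 h4 (neg_ne_zero.mpr h40)
  have e : ∀ n : ℤ, (-(-q ^ 4)) ^ n * (q ^ 4) ^ (n * (n - 1) / 2) = q ^ (2 * n ^ 2 + 2 * n) := by
    intro n
    rw [neg_neg, ← zpow_add₀ h40, ← zpow_natCast, ← zpow_mul]
    congr 1
    have := tri2 n
    push_cast
    linear_combination 2 * this
  simp only [e] at this
  refine ⟨this.1, this.2.trans ?_⟩
  have d : q ^ 4 / (-q ^ 4) = -1 := by rw [div_neg, div_self h40]
  have s := qPochInf_shift (-1) h4
  have n := qPochInf_neg (q ^ 4) h4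
  rw [d, s, eq_div_iff (J_ne hq (by norm_num))]
  have n' : qPochInf (q ^ 4) (q ^ 4) * qPochInf (-q ^ 4) (q ^ 4) = J q 8 := by
    rw [n]; unfold J; ring_nf
  rw [← n', show -1 * q ^ 4 = -q ^ 4 by ring]
  unfold J
  ring

lemma phi_prod {q : ℂ} (hq0 : q ≠ 0) (hq : ‖q‖ < 1) :
    Summable (fun c : ℤ => q ^ (2 * c ^ 2)) ∧
    ∑' c : ℤ, q ^ (2 * c ^ 2) = J q 4 ^ 5 / (J q 2 ^ 2 * J q 8 ^ 2) := by
  have h4 : ‖q ^ 4‖ < 1 := norm_pow_lt hq (by norm_num)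
  have h2 : ‖q ^ 2‖ < 1 := norm_pow_lt hq (by norm_num)
  have h40 : q ^ 4 ≠ 0 := pow_ne_zero _ hq0
  have h20 : q ^ 2 ≠ 0 := pow_ne_zero _ hq0
  have := jtp h40 h4 (neg_ne_zero.mpr h20)
  have e : ∀ n : ℤ, (-(-q ^ 2)) ^ n * (q ^ 4) ^ (n * (n - 1) / 2) = q ^ (2 * n ^ 2) := by
    intro n
    rw [neg_neg, ← zpow_natCast, ← zpow_mul, ← zpow_natCast, ← zpow_mul, ← zpow_add₀ hq0]
    congr 1
    have := tri2 n
    push_cast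
    linear_combination 2 * this
  simp only [e] at this
  refine ⟨this.1, this.2.trans ?_⟩
  have d : q ^ 4 / (-q ^ 2) = -q ^ 2 := by field_simp
  have n := qPochInf_neg (q ^ 2) h4
  have s2 := qPochInf_split (q ^ 2) h2 two_ne_zero
  have s4 := qPochInf_split (q ^ 4) h4 two_ne_zero
  simp only [Finset.prod_range_succ, Finset.prod_range_zero, one_mul, pow_zero, mul_one, pow_one] at s2 s4
  rw [show (q ^ 2) ^ 2 = q ^ 4 by ring, show (q ^ 4) ^ 2 = q ^ 8 by ring] at n
  rw [show (q ^ 2) ^ 2 = q ^ 4 by ring, show q ^ 2 * q ^ 2 = q ^ 4 by ring] at s2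
  rw [show (q ^ 4) ^ 2 = q ^ 8 by ring, show q ^ 4 * q ^ 4 = q ^ 8 by ring] at s4
  have n2 := J_ne hq (two_ne_zero)
  have n4 := J_ne hq (four_ne_zero)
  have n8 := J_ne hq (show (8 : ℕ) ≠ 0 by norm_num)
  unfold J at *
  rw [d, eq_div_iff (by positivity)]
  set a := qPochInf (q ^ 2) (q ^ 4)
  set b := qPochInf (-q ^ 2) (q ^ 4)
  set c := qPochInf (q ^ 4) (q ^ 8)
  rw [s2, mul_pow]
  have : a * b * qPochInf (q ^ 8) (q ^ 8) = qPochInf (q ^ 4) (q ^ 4) := by rw [n, ← s4]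
  linear_combination qPochInf (q ^ 4) (q ^ 4) ^ 3 * (a * b * qPochInf (q ^ 8) (q ^ 8) + qPochInf (q ^ 4) (q ^ 4)) * this

lemma slater_euler {x q : ℂ} (hx0 : x ≠ 0) (hq1 : ‖q‖ < 1) (hq : x ^ 2 = q) :
    Summable (fun n : ℕ => q ^ (2 * n ^ 2) / qPoch q q (2 * n)) ∧
    Summable (fun n : ℕ => q ^ (2 * n ^ 2 + 2 * n) / qPoch q q (2 * n + 1)) ∧
    qPochInf (-x) q = (∑' n : ℕ, q ^ (2 * n ^ 2) / qPoch q q (2 * n)) +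
      x * ∑' n : ℕ, q ^ (2 * n ^ 2 + 2 * n) / qPoch q q (2 * n + 1) := by
  have h := euler (-x) hq1
  have s := (euler_summable (-x) hq1).of_norm
  have e0 : ∀ n : ℕ, (-(-x)) ^ (2 * n) * q ^ (2 * n * (2 * n - 1) / 2) / qPoch q q (2 * n) =
      q ^ (2 * n ^ 2) / qPoch q q (2 * n) := by
    intro n
    rw [neg_neg, pow_mul, hq, ← pow_add]
    congr 2
    rw [mul_assoc, Nat.mul_div_cancel_left _ two_pos]
    rcases n with _ | n
    · simp
    · rw [show 2 * (n + 1) - 1 = 2 * n + 1 by omega]; ring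
  have e1 : ∀ n : ℕ, (-(-x)) ^ (2 * n + 1) * q ^ ((2 * n + 1) * (2 * n + 1 - 1) / 2) / qPoch q q (2 * n + 1) =
      x * (q ^ (2 * n ^ 2 + 2 * n) / qPoch q q (2 * n + 1)) := by
    intro n
    rw [neg_neg, pow_succ, pow_mul, hq, ← mul_div_assoc]
    congr 1
    rw [mul_comm _ x, mul_assoc, ← pow_add]
    congr 2
    rw [Nat.add_sub_cancel, show (2 * n + 1) * (2 * n) = 2 * ((2 * n + 1) * n) by ring, Nat.mul_div_cancel_left _ two_pos]
    ring
  have i0 : Function.Injective (fun n : ℕ => 2 * n) := fun a b h => by simpa using h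
  have i1 : Function.Injective (fun n : ℕ => 2 * n + 1) := fun a b h => by simpa using h
  obtain ⟨g, hg⟩ : ∃ g : ℕ → ℂ, g = fun n : ℕ => (-(-x)) ^ n * q ^ (n * (n - 1) / 2) / qPoch q q n := ⟨_, rfl⟩
  rw [← hg] at s
  have g0 : ∀ n : ℕ, g (2 * n) = q ^ (2 * n ^ 2) / qPoch q q (2 * n) := by
    intro n; rw [hg]; exact e0 n
  have g1 : ∀ n : ℕ, g (2 * n + 1) = x * (q ^ (2 * n ^ 2 + 2 * n) / qPoch q q (2 * n + 1)) := by
    intro n; rw [hg]; exact e1 n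
  have hs : ∑' n, g n = qPochInf (-x) q := by rw [hg]; exact h
  have s0 : Summable fun n : ℕ => g (2 * n) := s.comp_injective i0
  have s1 : Summable fun n : ℕ => g (2 * n + 1) := s.comp_injective i1
  rw [← tsum_even_add_odd s0 s1] at hs
  simp only [g0, g1] at s0 s1 hs
  rw [tsum_mul_left] at hs
  exact ⟨s0, (summable_mul_left_iff hx0).mp s1, hs.symm⟩

lemma slater {q : ℂ} (hq0 : q ≠ 0) (hq : ‖q‖ < 1) :
    (∑' n : ℕ, q ^ (2 * n ^ 2) / qPoch q q (2 * n)) = Jam q 1 8 * Jam q 6 16 / (J q 1 * J q 16) ∧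
    (∑' n : ℕ, q ^ (2 * n ^ 2 + 2 * n) / qPoch q q (2 * n + 1)) = Jam q 3 8 * Jam q 2 16 / (J q 1 * J q 16) := by
  obtain ⟨x, hx⟩ := IsAlgClosed.exists_pow_nat_eq q two_pos
  have hx0 : x ≠ 0 := by rintro rfl; apply hq0; rw [← hx]; simp
  have hx1 : ‖x‖ < 1 := by
    rw [← hx, norm_pow] at hq
    by_contra h
    push Not at h
    nlinarith
  have E1 := (slater_euler hx0 hq hx).2.2
  have E2 := (slater_euler (neg_ne_zero.mpr hx0) hq (by rw [neg_sq, hx])).2.2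
  have T1 := pent4 hx0 hx1 hx
  have T2 := pent4 (neg_ne_zero.mpr hx0) (by simpa using hx1) (by rw [neg_sq, hx])
  have Q1 := quint hq0 hq (s := 1) (s' := 6) (by norm_num)
  have Q3 := quint hq0 hq (s := 3) (s' := 2) (by norm_num)
  rw [E1] at T1
  rw [E2] at T2
  have f1 : ∀ t : ℤ, 12 * t ^ 2 + (3 * ((1 : ℕ) : ℤ) - 4) * t = 12 * t ^ 2 - t := by intro t; push_cast; ring
  have f2 : ∀ t : ℤ, 12 * t ^ 2 + (3 * ((1 : ℕ) : ℤ) + 4) * t + ((1 : ℕ) : ℤ) = 12 * t ^ 2 + 7 * t + 1 := by intro t; push_cast; ring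
  have f3 : ∀ t : ℤ, 12 * t ^ 2 + (3 * ((3 : ℕ) : ℤ) - 4) * t = 12 * t ^ 2 + 5 * t := by intro t; push_cast; ring
  have f4 : ∀ t : ℤ, 12 * t ^ 2 + (3 * ((3 : ℕ) : ℤ) + 4) * t + ((3 : ℕ) : ℤ) = 12 * t ^ 2 + 13 * t + 3 := by intro t; push_cast; ring
  simp only [f1, f2] at Q1
  simp only [f3, f4] at Q3
  have n1 := J_ne hq one_ne_zero
  have n16 := J_ne hq (show (16 : ℕ) ≠ 0 by norm_num)
  have d1 : J q 1 = qPochInf q q := by simp [J]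
  rw [← d1] at T1 T2
  rw [eq_div_iff (mul_ne_zero n1 n16), eq_div_iff (mul_ne_zero n1 n16), Q1, Q3]
  constructor
  · linear_combination J q 16 * (T1 + T2) / 2
  · apply mul_left_cancel₀ hx0
    linear_combination J q 16 * (T1 - T2) / 2

def anti2 : (Σ n : ℕ, {x : ℕ × ℕ // x ∈ Finset.HasAntidiagonal.antidiagonal n}) ≃ ℕ × ℕ where
  toFun s := s.2.1
  invFun x := ⟨x.1 + x.2, ⟨x, by simp⟩⟩
  left_inv := by
    rintro ⟨n, ⟨x, h⟩⟩
    have h' : x.1 + x.2 = n := by simpa using h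
    subst h'
    rfl
  right_inv x := rfl

def anti3 : (Σ p : ℕ × ℕ, {x : ℕ × ℕ // x ∈ Finset.HasAntidiagonal.antidiagonal p.2}) ≃ ℕ × ℕ × ℕ where
  toFun s := (s.1.1, s.2.1)
  invFun x := ⟨(x.1, x.2.1 + x.2.2), ⟨x.2, by simp⟩⟩
  left_inv := by
    rintro ⟨⟨j, n⟩, ⟨x, h⟩⟩
    have h' : x.1 + x.2 = n := by simpa using h
    subst h'
    rfl
  right_inv x := rfl

lemma tsum_anti2 (f : ℕ × ℕ → ℂ) (hf : Summable f) :
    ∑' x, f x = ∑' n : ℕ, ∑ x ∈ Finset.HasAntidiagonal.antidiagonal n, f x := by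
  have hs : Summable fun s => f (anti2 s) := (anti2.summable_iff).mpr hf
  rw [← anti2.tsum_eq, hs.tsum_sigma]
  apply tsum_congr
  intro n
  rw [tsum_fintype]
  exact Finset.sum_attach (Finset.HasAntidiagonal.antidiagonal n) f

lemma tsum_anti3 (f : ℕ × ℕ × ℕ → ℂ) (hf : Summable f) :
    ∑' x, f x = ∑' n : ℕ, ∑ p ∈ Finset.HasAntidiagonal.antidiagonal n,
      ∑ x ∈ Finset.HasAntidiagonal.antidiagonal p.2, f (p.1, x) := by
  have hs : Summable fun s => f (anti3 s) := (anti3.summable_iff).mpr hf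
  have e : ∀ p : ℕ × ℕ, ∑' s : {x : ℕ × ℕ // x ∈ Finset.HasAntidiagonal.antidiagonal p.2}, f (anti3 ⟨p, s⟩) =
      ∑ x ∈ Finset.HasAntidiagonal.antidiagonal p.2, f (p.1, x) := by
    intro p
    rw [tsum_fintype]
    exact Finset.sum_attach (Finset.HasAntidiagonal.antidiagonal p.2) (fun x => f (p.1, x))
  have h2 := hs.sigma
  rw [← anti3.tsum_eq, hs.tsum_sigma]
  simp only [e] at h2 ⊢
  exact tsum_anti2 _ h2

lemma geo3 {r : ℝ} (h0 : 0 < r) (h1 : r < 1) :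
    Summable fun x : ℕ × ℕ × ℕ => r ^ x.1 * (r ^ x.2.1 * r ^ x.2.2) := by
  have g := summable_geometric_of_lt_one h0.le h1
  have n : (0 : ℕ → ℝ) ≤ fun n => r ^ n := fun n => by positivity
  have g2 := g.mul_of_nonneg g n n
  exact g.mul_of_nonneg g2 n (fun x => by simp only [Pi.zero_apply]; positivity)

lemma geo4 {r : ℝ} (h0 : 0 < r) (h1 : r < 1) :
    Summable fun x : ℕ × ℕ × ℕ × ℕ => r ^ x.1 * (r ^ x.2.1 * (r ^ x.2.2.1 * r ^ x.2.2.2)) := by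
  have g := summable_geometric_of_lt_one h0.le h1
  have n : (0 : ℕ → ℝ) ≤ fun n => r ^ n := fun n => by positivity
  exact g.mul_of_nonneg (geo3 h0 h1) n (fun x => by simp only [Pi.zero_apply]; positivity)

lemma summ_gen {ι : Type*} {q : ℂ} (hq0 : q ≠ 0) (hq : ‖q‖ < 1) (E : ι → ℤ) (N : ι → ℕ)
    (hN : Summable fun x => ‖q‖ ^ (N x)) (hE : ∀ x, (N x : ℤ) - 3 ≤ E x) (W : ι → ℂ) (C : ℝ)
    (hW : ∀ x, ‖W x‖ ≤ C) : Summable fun x => q ^ E x * W x := by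
  have h0 : 0 < ‖q‖ := norm_pos_iff.mpr hq0
  apply Summable.of_norm_bounded (g := fun x => (‖q‖ ^ (N x)) * (‖q‖ ^ (-3 : ℤ) * C)) (hN.mul_right _)
  intro x
  rw [norm_mul, norm_zpow, ← mul_assoc]
  have : ‖q‖ ^ (E x) ≤ ‖q‖ ^ (N x) * ‖q‖ ^ (-3 : ℤ) := by
    rw [← zpow_natCast, ← zpow_add₀ h0.ne']
    exact zpow_le_zpow_right_of_le_one₀ h0 hq.le (hE x)
  exact mul_le_mul this (hW x) (norm_nonneg _) (by positivity)

/-- the four-fold summand -/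
noncomputable def G4 (q : ℂ) (x : ℕ × ℕ × ℕ × ℕ) : ℂ :=
  q ^ (((x.2.1 : ℤ) + x.2.2.1 + x.2.2.2 - x.1) ^ 2 + (x.1 : ℤ) ^ 2 - 2 * x.1 + ((x.2.1 : ℤ) ^ 2 + 1 * x.2.1) +
    (((x.2.2.1 : ℤ) - x.2.2.2) ^ 2 + 2 * x.2.2.1)) *
  (cc q x.1 * (cc q x.2.1 * (cc q x.2.2.1 * cc q x.2.2.2)))

noncomputable def H3 (q : ℂ) (x : ℕ × ℕ × ℕ) : ℂ :=
  q ^ (((x.2.1 : ℤ) + x.2.2 - x.1) ^ 2 + (x.1 : ℤ) ^ 2 - 2 * x.1 + ((x.2.1 : ℤ) ^ 2 + 2 * x.2.1) + x.2.2) *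
  (cc q x.1 * (cc q x.2.1 * (qPoch q q x.2.2)⁻¹))

lemma G4_summable {q : ℂ} (hq0 : q ≠ 0) (hq : ‖q‖ < 1) : Summable (G4 q) := by
  obtain ⟨C, hC0, hC⟩ := qPoch_inv_bdd (norm_pow_lt hq two_ne_zero)
  have h0 : 0 < ‖q‖ := norm_pos_iff.mpr hq0
  refine summ_gen hq0 hq _ (fun x => x.1 + x.2.1 + x.2.2.1 + x.2.2.2) ?_ ?_ _ (C * (C * (C * C))) ?_
  · refine (geo4 h0 hq).congr fun x => ?_
    ring
  · rintro ⟨i, j, k, l⟩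
    simp only
    push_cast
    have a1 : (0 : ℤ) ≤ ((k : ℤ) - l) * ((k : ℤ) - l + 1) := by
      rcases le_or_gt 0 ((k : ℤ) - l) with h | h <;> nlinarith
    have a2 : (0 : ℤ) ≤ ((i : ℤ) - 1) * ((i : ℤ) - 2) := by
      rcases le_or_gt 2 (i : ℤ) with h | h <;> nlinarith
    nlinarith [sq_nonneg ((j : ℤ) + k + l - i), sq_nonneg (j : ℤ)]
  · rintro ⟨i, j, k, l⟩
    simp only [norm_mul, cc]
    gcongr <;> apply hC

lemma H3_summable {q : ℂ} (hq0 : q ≠ 0) (hq : ‖q‖ < 1) : Summable (H3 q) := by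
  obtain ⟨C, hC0, hC⟩ := qPoch_inv_bdd (norm_pow_lt hq two_ne_zero)
  obtain ⟨D, hD0, hD⟩ := qPoch_inv_bdd hq
  have h0 : 0 < ‖q‖ := norm_pos_iff.mpr hq0
  refine summ_gen hq0 hq _ (fun x => x.1 + x.2.1 + x.2.2) ?_ ?_ _ (C * (C * D)) ?_
  · refine (geo3 h0 hq).congr fun x => ?_
    ring
  · rintro ⟨i, a, b⟩
    simp only
    push_cast
    have a2 : (0 : ℤ) ≤ ((i : ℤ) - 1) * ((i : ℤ) - 2) := by
      rcases le_or_gt 2 (i : ℤ) with h | h <;> nlinarith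
    nlinarith [sq_nonneg ((a : ℤ) + b - i), sq_nonneg (a : ℤ)]
  · rintro ⟨i, a, b⟩
    simp only [norm_mul, cc]
    gcongr
    · apply hC
    · apply hC
    · apply hD

lemma G4_eq_H3 {q : ℂ} (hq0 : q ≠ 0) (hq : ‖q‖ < 1) : ∑' x, G4 q x = ∑' x, H3 q x := by
  have sG := G4_summable hq0 hq
  have sH := H3_summable hq0 hq
  rw [sG.tsum_prod, sH.tsum_prod]
  apply tsum_congr
  intro i
  rw [tsum_anti3 _ (sG.prod_factor i), tsum_anti2 _ (sH.prod_factor i)]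
  apply tsum_congr
  intro n
  have f := finF hq0 hq n
  have e1 : ∀ p ∈ Finset.HasAntidiagonal.antidiagonal n, ∑ x ∈ Finset.HasAntidiagonal.antidiagonal p.2, G4 q (i, p.1, x) =
      (q ^ (((n : ℤ) - i) ^ 2 + (i : ℤ) ^ 2 - 2 * i) * cc q i) *
        ((q ^ (p.1 ^ 2 + 1 * p.1) * cc q p.1) * RR q p.2) := by
    rintro ⟨j, m⟩ hp
    have hp : j + m = n := by simpa using hp
    subst hp
    unfold RR
    rw [Finset.mul_sum, Finset.mul_sum]
    apply Finset.sum_congr rfl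
    rintro ⟨k, l⟩ hx
    have hx : k + l = m := by simpa using hx
    subst hx
    simp only [G4]
    rw [zpow_add₀ hq0, zpow_add₀ hq0 _ ((j : ℤ) ^ 2 + 1 * j), ← zpow_natCast q]
    push_cast
    ring_nf
  have e2 : ∀ p ∈ Finset.HasAntidiagonal.antidiagonal n, H3 q (i, p) =
      (q ^ (((n : ℤ) - i) ^ 2 + (i : ℤ) ^ 2 - 2 * i) * cc q i) *
        ((q ^ (p.1 ^ 2 + 2 * p.1) * cc q p.1) * (q ^ p.2 / qPoch q q p.2)) := by
    rintro ⟨a, b⟩ hp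
    have hp : a + b = n := by simpa using hp
    subst hp
    simp only [H3]
    rw [zpow_add₀ hq0, zpow_add₀ hq0 _ ((a : ℤ) ^ 2 + 2 * a), ← zpow_natCast q, ← zpow_natCast q b]
    push_cast
    ring_nf
  rw [Finset.sum_congr rfl e1, Finset.sum_congr rfl e2, ← Finset.mul_sum, ← Finset.mul_sum, f]

def rot3 : ℕ × ℕ × ℕ ≃ ℕ × ℕ × ℕ where
  toFun y := (y.2.2, y.2.1, y.1)
  invFun y := (y.2.2, y.2.1, y.1)
  left_inv _ := rfl
  right_inv _ := rfl

lemma H3_sum {q : ℂ} (hq0 : q ≠ 0) (hq : ‖q‖ < 1) :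
    ∑' x, H3 q x = (∑' b : ℕ, (q ^ b / qPoch q q b) * ∑' c : ℤ, q ^ ((c + b) ^ 2 + c ^ 2 + 2 * c)) *
      (J q 2)⁻¹ := by
  have sH := H3_summable hq0 hq
  have sR : Summable fun y => H3 q (rot3 y) := (rot3.summable_iff).mpr sH
  have h2 : ‖q ^ 2‖ < 1 := norm_pow_lt hq two_ne_zero
  rw [← rot3.tsum_eq, sR.tsum_prod, ← tsum_mul_right]
  apply tsum_congr
  intro b
  obtain ⟨F, hF⟩ : ∃ F : ℤ → ℂ, ∀ c, F c = q ^ ((c + b) ^ 2 + c ^ 2 + 2 * c) := ⟨_, fun _ => rfl⟩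
  have e : ∀ x : ℕ × ℕ, H3 q (rot3 (b, x)) = (q ^ b / qPoch q q b) *
      (F ((x.1 : ℤ) - x.2) *
        ((q ^ 2) ^ (x.1 * x.2) / (qPoch (q ^ 2) (q ^ 2) x.1 * qPoch (q ^ 2) (q ^ 2) x.2))) := by
    rintro ⟨a, i⟩
    simp only [H3, rot3, Equiv.coe_fn_mk, cc, hF]
    have : ((a : ℤ) + b - i) ^ 2 + (i : ℤ) ^ 2 - 2 * i + ((a : ℤ) ^ 2 + 2 * a) + b =
      b + (((a : ℤ) - i + b) ^ 2 + ((a : ℤ) - i) ^ 2 + 2 * ((a : ℤ) - i)) + ((2 * (a * i) : ℕ) : ℤ) := by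
      push_cast; ring
    rw [this, zpow_add₀ hq0, zpow_add₀ hq0, zpow_natCast, zpow_natCast, ← pow_mul]
    simp only [div_eq_mul_inv, mul_inv]
    ring
  have sb : Summable fun x : ℕ × ℕ => H3 q (rot3 (b, x)) := sR.prod_factor b
  rw [tsum_congr e, tsum_mul_left]
  have hne : q ^ b / qPoch q q b ≠ 0 := div_ne_zero (pow_ne_zero _ hq0) (qPoch_pp_ne hq b)
  simp only [e] at sb
  have sb' := (summable_mul_left_iff hne).mp sb
  have gd := (group_diff h2 F sb').2
  have hJ : J q 2 = qPochInf (q ^ 2) (q ^ 2) := by unfold J; rfl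
  rw [gd, mul_assoc, hJ]
  simp only [hF]

lemma theta_even {q : ℂ} (hq0 : q ≠ 0) (n : ℕ) :
    ∑' c : ℤ, q ^ ((c + (2 * n : ℕ)) ^ 2 + c ^ 2 + 2 * c) =
      q ^ (2 * (n : ℤ) ^ 2 - 2 * n) * ∑' c : ℤ, q ^ (2 * c ^ 2 + 2 * c) := by
  rw [← (Equiv.subRight (n : ℤ)).tsum_eq, ← tsum_mul_left]
  apply tsum_congr
  intro c
  simp only [Equiv.subRight_apply]
  rw [← zpow_add₀ hq0]
  congr 1
  push_cast
  ring

lemma theta_odd {q : ℂ} (hq0 : q ≠ 0) (n : ℕ) :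
    ∑' c : ℤ, q ^ ((c + (2 * n + 1 : ℕ)) ^ 2 + c ^ 2 + 2 * c) =
      q ^ (2 * (n : ℤ) ^ 2 - 1) * ∑' c : ℤ, q ^ (2 * c ^ 2) := by
  rw [← (Equiv.subRight (n + 1 : ℤ)).tsum_eq, ← tsum_mul_left]
  apply tsum_congr
  intro c
  simp only [Equiv.subRight_apply]
  rw [← zpow_add₀ hq0]
  congr 1
  push_cast
  ring

lemma b_sum {q : ℂ} (hq0 : q ≠ 0) (hq : ‖q‖ < 1) :
    (∑' b : ℕ, (q ^ b / qPoch q q b) * ∑' c : ℤ, q ^ ((c + b) ^ 2 + c ^ 2 + 2 * c)) =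
    (∑' n : ℕ, q ^ (2 * n ^ 2) / qPoch q q (2 * n)) * (∑' c : ℤ, q ^ (2 * c ^ 2 + 2 * c)) +
    (∑' n : ℕ, q ^ (2 * n ^ 2 + 2 * n) / qPoch q q (2 * n + 1)) * ∑' c : ℤ, q ^ (2 * c ^ 2) := by
  obtain ⟨x, hx⟩ := IsAlgClosed.exists_pow_nat_eq q two_pos
  have hx0 : x ≠ 0 := by rintro rfl; apply hq0; rw [← hx]; simp
  obtain ⟨s0, s1, -⟩ := slater_euler hx0 hq hx
  obtain ⟨g, hg⟩ : ∃ g : ℕ → ℂ, g = fun b : ℕ => (q ^ b / qPoch q q b) *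
    ∑' c : ℤ, q ^ ((c + b) ^ 2 + c ^ 2 + 2 * c) := ⟨_, rfl⟩
  rw [← hg]
  have g0 : ∀ n : ℕ, g (2 * n) = q ^ (2 * n ^ 2) / qPoch q q (2 * n) * ∑' c : ℤ, q ^ (2 * c ^ 2 + 2 * c) := by
    intro n
    rw [hg]
    beta_reduce
    rw [theta_even hq0, ← mul_assoc, div_mul_eq_mul_div, ← zpow_natCast, ← zpow_add₀ hq0,
      ← zpow_natCast q (2 * n ^ 2)]
    congr 3
    push_cast
    ring
  have g1 : ∀ n : ℕ, g (2 * n + 1) = q ^ (2 * n ^ 2 + 2 * n) / qPoch q q (2 * n + 1) * ∑' c : ℤ, q ^ (2 * c ^ 2) := by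
    intro n
    rw [hg]
    beta_reduce
    rw [theta_odd hq0, ← mul_assoc, div_mul_eq_mul_div, ← zpow_natCast, ← zpow_add₀ hq0,
      ← zpow_natCast q (2 * n ^ 2 + 2 * n)]
    congr 3
    push_cast
    ring
  rw [← tsum_even_add_odd (f := g) ((s0.mul_right _).congr fun n => (g0 n).symm)
    ((s1.mul_right _).congr fun n => (g1 n).symm)]
  simp only [g0, g1, tsum_mul_right]

theorem stmt_5 (q : ℂ) (h0 : 0 < ‖q‖) (h1 : ‖q‖ < 1) :
    (∑' p : ℕ × ℕ × ℕ × ℕ,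
      (fun (i j k l : ℕ) =>
        q ^ ((2*(i:ℤ)^2 + 2*(j:ℤ)^2 + 2*(k:ℤ)^2 + 2*(l:ℤ)^2 - 2*(i:ℤ)*(j:ℤ) - 2*(i:ℤ)*(k:ℤ) - 2*(i:ℤ)*(l:ℤ) + 2*(j:ℤ)*(k:ℤ) + 2*(j:ℤ)*(l:ℤ) - 2*(i:ℤ) + (j:ℤ) + 2*(k:ℤ)) : ℤ) /
          (qPoch (q ^ 2) (q ^ 2) i * qPoch (q ^ 2) (q ^ 2) j * qPoch (q ^ 2) (q ^ 2) k * qPoch (q ^ 2) (q ^ 2) l))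
        p.1 p.2.1 p.2.2.1 p.2.2.2)
    = (1 / (J q 1 * J q 2 * J q 16)) *
      (2 * (J q 8)^2 * Jam q 1 8 * Jam q 6 16 / J q 4
        + (J q 4)^5 * Jam q 3 8 * Jam q 2 16 / ((J q 2)^2 * (J q 8)^2)) := by
  have hq0 : q ≠ 0 := norm_pos_iff.mp h0
  have e : ∀ p : ℕ × ℕ × ℕ × ℕ, (fun (i j k l : ℕ) =>
        q ^ ((2*(i:ℤ)^2 + 2*(j:ℤ)^2 + 2*(k:ℤ)^2 + 2*(l:ℤ)^2 - 2*(i:ℤ)*(j:ℤ) - 2*(i:ℤ)*(k:ℤ) - 2*(i:ℤ)*(l:ℤ) + 2*(j:ℤ)*(k:ℤ) + 2*(j:ℤ)*(l:ℤ) - 2*(i:ℤ) + (j:ℤ) + 2*(k:ℤ)) : ℤ) /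
          (qPoch (q ^ 2) (q ^ 2) i * qPoch (q ^ 2) (q ^ 2) j * qPoch (q ^ 2) (q ^ 2) k * qPoch (q ^ 2) (q ^ 2) l))
        p.1 p.2.1 p.2.2.1 p.2.2.2 = G4 q p := by
    rintro ⟨i, j, k, l⟩
    simp only [G4, cc, div_eq_mul_inv, mul_inv, mul_assoc]
    congr 2
    ring
  rw [tsum_congr e, G4_eq_H3 hq0 h1, H3_sum hq0 h1, b_sum hq0 h1, (slater hq0 h1).1, (slater hq0 h1).2,
    (psi_prod hq0 h1).2, (phi_prod hq0 h1).2]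
  have n1 := J_ne h1 one_ne_zero
  have n2 := J_ne h1 two_ne_zero
  have n4 := J_ne h1 four_ne_zero
  have n8 := J_ne h1 (show (8 : ℕ) ≠ 0 by norm_num)
  have n16 := J_ne h1 (show (16 : ℕ) ≠ 0 by norm_num)
  field_simp
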